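/- There exist absolute constants c > 0, K ≥ 1 and c0 > 0 such that for every finite set A ⊆ ℝ, one has max{ Sid^×_K(A), Sid^×_K(A+1) } ≥ c0·|A|^{1/2 + c}, where A + 1 = {a + 1 : a ∈ A}. -/

import Mathlib

open scoped BigOperators

/-- The number of pairs `(x, y) ∈ S × S` with `x = lam * y`. -/
noncomputable def mulPairCount {F : Type*} [Mul F] (lam : F) (S : Finset F) : ℕ :=
  Set.ncard {q : F × F | q.1 ∈ S ∧ q.2 ∈ S ∧ q.1 = lam * q.2}

/-- `S` is multiplicatively `K`-Sidon: for every `lam ≠ 1` the number of pairs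
`(x, y) ∈ S × S` with `x = lam * y` is at most `K`. -/
def IsMulSidon {F : Type*} [MulOneClass F] (K : ℝ) (S : Finset F) : Prop :=
  ∀ lam : F, lam ≠ 1 → (mulPairCount lam S : ℝ) ≤ K

/-!
Put `N = √|A|` and suppose neither `A` nor `A + 1` has a Sidon subset much larger than `N`. A random
subset of `A` of density about `1 / N`, with one point deleted from each surviving bad
configuration, would be such a subset unless there were about `N` dilations `l` matching a large
part of `A` with itself; call their set `L`. Many `b ∈ A` are then mapped into `A` by many `l ∈ L`.
For the set `B` of these `b`, the same dichotomy applied to `B + 1` produces a set `M` of about `N`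
dilations `m`, for which the line `y + 1 = m (x + 1)` is rich in `B × B`.

Conjugating these lines by dilations from `L` gives lines `y = (l m / l') x + l (m - 1)`, and
composing two of them first gives lines `y = l q x + l (q - 1)` with `q ∈ M / M`, many of which are
rich in `A × A`. A weak Szemerédi–Trotter bound, `k`-rich lines in `P × Q` number
`O(|P|² |Q|² / k³)`, then leaves only `O(N)` popular intercepts `l (m - 1)` and `O(N)` popular
ratios `q`. But for popular intercepts `T` and ratios `Q` the `N²` lines `y = l m' x - l` send
`m / m'` to `l (m - 1)`, so they are `N`-rich in `Q × T`, and the same bound gives `N⁵ = O(N⁴)`. All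
losses are powers of a parameter `t`, which may be taken to be a small power of `N`.
-/

open scoped Finset Pointwise

section Counting

variable {ι κ : Type*}

theorem le_card_filter_of_le_sum {I : Finset ι} {f : ι → ℝ} {X Y a : ℝ} (hX : #I ≤ X)
    (hY : 0 < Y) (ha : 0 ≤ a) (hf : ∀ i ∈ I, f i ≤ Y) (hsum : X * Y * (2 * a) ≤ ∑ i ∈ I, f i) :
    X * a ≤ #{i ∈ I | Y * a ≤ f i} := by
  have hlarge : ∑ i ∈ I with Y * a ≤ f i, f i ≤ #{i ∈ I | Y * a ≤ f i} * Y := by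
    rw [← nsmul_eq_mul]
    exact Finset.sum_le_card_nsmul _ _ _ fun i hi ↦ hf i (Finset.mem_filter.mp hi).1
  have hsmall : ∑ i ∈ I with ¬ Y * a ≤ f i, f i ≤ X * (Y * a) :=
    calc ∑ i ∈ I with ¬ Y * a ≤ f i, f i ≤ #{i ∈ I | ¬ Y * a ≤ f i} * (Y * a) := by
          rw [← nsmul_eq_mul]
          exact Finset.sum_le_card_nsmul _ _ _ fun i hi ↦ (not_le.mp (Finset.mem_filter.mp hi).2).le
      _ ≤ #I * (Y * a) := by gcongr; exact Finset.filter_subset _ _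
      _ ≤ X * (Y * a) := by gcongr
  have hsplit := Finset.sum_filter_add_sum_filter_not I (fun i ↦ Y * a ≤ f i) f
  refine le_of_mul_le_mul_right ?_ hY
  linarith

theorem sum_card_filter_comm (I : Finset ι) (J : Finset κ) (r : ι → κ → Prop)
    [∀ i j, Decidable (r i j)] :
    ∑ i ∈ I, (#{j ∈ J | r i j} : ℝ) = ∑ j ∈ J, (#{i ∈ I | r i j} : ℝ) := by
  exact_mod_cast Finset.sum_card_bipartiteAbove_eq_sum_card_bipartiteBelow r

theorem le_card_filter_of_le_card_filter {I : Finset ι} {J : Finset κ} (r : ι → κ → Prop)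
    [∀ i j, Decidable (r i j)] {X Y a b c : ℝ} (hI : #I ≤ X) (hY : 0 < Y) (hJ : #J ≤ Y)
    (haJ : Y * a ≤ #J) (hb : 0 ≤ b) (hdeg : ∀ j ∈ J, X * b ≤ #{i ∈ I | r i j}) (hc : 0 ≤ c)
    (hcab : 2 * c ≤ a * b) :
    X * c ≤ #{i ∈ I | Y * c ≤ #{j ∈ J | r i j}} := by
  have hX : 0 ≤ X := (Nat.cast_nonneg _).trans hI
  refine le_card_filter_of_le_sum hI hY hc
    (fun i _ ↦ (Nat.cast_le.mpr (Finset.card_filter_le _ _)).trans hJ) ?_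
  calc X * Y * (2 * c) ≤ X * Y * (a * b) := by gcongr
    _ = Y * a * (X * b) := by ring
    _ ≤ #J * (X * b) := by gcongr
    _ ≤ ∑ j ∈ J, (#{i ∈ I | r i j} : ℝ) := by
      rw [← nsmul_eq_mul]
      exact Finset.card_nsmul_le_sum _ _ _ hdeg
    _ = ∑ i ∈ I, (#{j ∈ J | r i j} : ℝ) := (sum_card_filter_comm I J r).symm

theorem sq_sum_card_filter_le (I : Finset ι) (J : Finset κ) (r : ι → κ → Prop)
    [∀ i j, Decidable (r i j)] :
    (∑ i ∈ I, (#{j ∈ J | r i j} : ℝ)) ^ 2 ≤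
      #J * ∑ z ∈ I ×ˢ I, (#{j ∈ J | r z.1 j ∧ r z.2 j} : ℝ) := by
  have hcodeg : ∑ z ∈ I ×ˢ I, (#{j ∈ J | r z.1 j ∧ r z.2 j} : ℝ) =
      ∑ j ∈ J, (#{i ∈ I | r i j} : ℝ) ^ 2 := by
    rw [sum_card_filter_comm (I ×ˢ I) J fun z j ↦ r z.1 j ∧ r z.2 j]
    refine Finset.sum_congr rfl fun j _ ↦ ?_
    rw [Finset.filter_product (fun i ↦ r i j) (fun i ↦ r i j), Finset.card_product, Nat.cast_mul,
      sq]
  rw [hcodeg, sum_card_filter_comm]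
  exact sq_sum_le_card_mul_sum_sq

theorem card_filter_image_mul_le [DecidableEq κ] (I : Finset ι) (f : ι → κ) (h : ℝ) :
    #{c ∈ I.image f | h ≤ #{i ∈ I | f i = c}} * h ≤ #I := by
  rw [Finset.card_eq_sum_card_image f I, Nat.cast_sum, ← nsmul_eq_mul]
  exact (Finset.card_nsmul_le_sum _ _ _ fun c hc ↦ (Finset.mem_filter.mp hc).2).trans
    (Finset.sum_le_sum_of_subset_of_nonneg (Finset.filter_subset _ _) fun _ _ _ ↦ by positivity)

theorem two_mul_card_le_two_mul_card_image_add [DecidableEq κ] (I : Finset ι) (f : ι → κ) :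
    2 * #I ≤ 2 * #(I.image f) + #{z ∈ I.offDiag | f z.1 = f z.2} := by
  classical
  have hfibre : ∀ c, #{z ∈ {z ∈ I.offDiag | f z.1 = f z.2} | f z.1 = c} =
      #{i ∈ I | f i = c} * #{i ∈ I | f i = c} - #{i ∈ I | f i = c} := fun c ↦ by
    rw [← Finset.offDiag_card]
    congr 1
    ext z
    simp only [Finset.mem_filter, Finset.mem_offDiag]
    grind
  have hmaps : Set.MapsTo (fun z : ι × ι ↦ f z.1)
      ({z ∈ I.offDiag | f z.1 = f z.2} : Finset (ι × ι)) (I.image f) := fun z hz ↦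
    Finset.mem_image_of_mem f (Finset.mem_offDiag.mp (Finset.mem_filter.mp hz).1).1
  rw [Finset.card_eq_sum_card_fiberwise hmaps, Finset.card_eq_sum_card_image f I,
    Finset.card_eq_sum_ones (I.image f), Finset.mul_sum, Finset.mul_sum, ← Finset.sum_add_distrib]
  refine Finset.sum_le_sum fun c _ ↦ ?_
  rw [hfibre]
  generalize #{i ∈ I | f i = c} = n
  rcases n with _ | _ | n
  · simp
  · simp
  · rw [← Nat.mul_sub_one, Nat.add_succ_sub_one]
    nlinarith

end Counting

section Deletion

variable {α ι : Type*} [DecidableEq α]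

theorem sum_powerset_filter_superset {R : Type*} [CommRing R] {B D : Finset α} (hD : D ⊆ B)
    (p : R) :
    ∑ S ∈ B.powerset with D ⊆ S, p ^ #S * (1 - p) ^ #(B \ S) = p ^ #D := by
  have hIcc : {S ∈ B.powerset | D ⊆ S} = (B \ D).powerset.image (D ∪ ·) := by
    rw [← Finset.Icc_eq_image_powerset hD]
    ext S
    simp [and_comm]
  have hinj : Set.InjOn (D ∪ ·) ((B \ D).powerset : Set (Finset α)) := fun S hS S' hS' h ↦ by
    rw [Finset.mem_coe, Finset.mem_powerset] at hS hS'
    rw [← Finset.union_sdiff_cancel_left (Finset.disjoint_of_subset_right hS Finset.disjoint_sdiff),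
      ← Finset.union_sdiff_cancel_left (Finset.disjoint_of_subset_right hS' Finset.disjoint_sdiff)]
    exact congrArg (· \ D) h
  calc ∑ S ∈ B.powerset with D ⊆ S, p ^ #S * (1 - p) ^ #(B \ S)
      = ∑ S ∈ (B \ D).powerset, p ^ #D * (p ^ #S * (1 - p) ^ (#(B \ D) - #S)) := by
        rw [hIcc, Finset.sum_image hinj]
        refine Finset.sum_congr rfl fun S hS ↦ ?_
        rw [Finset.mem_powerset] at hS
        rw [Finset.card_union_of_disjoint
            (Finset.disjoint_of_subset_right hS Finset.disjoint_sdiff), pow_add, mul_assoc,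
          ← Finset.card_sdiff_of_subset hS, sdiff_sdiff_left]
        rfl
    _ = p ^ #D := by
        rw [← Finset.mul_sum, Finset.sum_pow_mul_eq_add_pow, add_sub_cancel, one_pow, mul_one]

theorem sum_powerset_mul_card_filter_subset {R : Type*} [CommRing R] {B : Finset α} {I : Finset ι}
    {D : ι → Finset α} (hD : ∀ i ∈ I, D i ⊆ B) (p : R) :
    ∑ S ∈ B.powerset, p ^ #S * (1 - p) ^ #(B \ S) * #{i ∈ I | D i ⊆ S} = ∑ i ∈ I, p ^ #(D i) := by
  simp only [Finset.card_filter, Nat.cast_sum, Finset.mul_sum]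
  rw [Finset.sum_comm]
  refine Finset.sum_congr rfl fun i hi ↦ ?_
  rw [← sum_powerset_filter_superset (hD i hi) p, Finset.sum_filter]
  exact Finset.sum_congr rfl fun S _ ↦ by simp

theorem exists_subset_le_card_sub_card_filter {B : Finset α} {I : Finset ι} {D : ι → Finset α}
    (hD : ∀ i ∈ I, D i ⊆ B) {p : ℝ} (hp₀ : 0 ≤ p) (hp₁ : p ≤ 1) :
    ∃ S ⊆ B, p * #B - ∑ i ∈ I, p ^ #(D i) ≤ #S - #{i ∈ I | D i ⊆ S} := by
  -- `w` is the law of the random subset of `B` keeping each element independently with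
  -- probability `p`.
  let w : Finset α → ℝ := fun S ↦ p ^ #S * (1 - p) ^ #(B \ S)
  let gain : Finset α → ℝ := fun S ↦ #S - #{i ∈ I | D i ⊆ S}
  have hw : ∀ S, 0 ≤ w S := fun S ↦ mul_nonneg (pow_nonneg hp₀ _) (pow_nonneg (by linarith) _)
  have hw_sum : ∑ S ∈ B.powerset, w S = 1 := by
    simpa [w] using sum_powerset_filter_superset (Finset.empty_subset B) p
  have hw_card : ∑ S ∈ B.powerset, w S * #S = p * #B := by
    have h := sum_powerset_mul_card_filter_subset (B := B) (I := B) (D := singleton)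
      (fun x hx ↦ Finset.singleton_subset_iff.mpr hx) p
    simp only [Finset.card_singleton, pow_one, Finset.sum_const, nsmul_eq_mul] at h
    rw [mul_comm p, ← h]
    refine Finset.sum_congr rfl fun S hS ↦ ?_
    simp only [Finset.singleton_subset_iff, Finset.filter_mem_eq_inter,
      Finset.inter_eq_right.mpr (Finset.mem_powerset.mp hS), w]
  obtain ⟨S, hSB, hmax⟩ := Finset.exists_max_image B.powerset gain (Finset.powerset_nonempty B)
  refine ⟨S, Finset.mem_powerset.mp hSB, ?_⟩
  calc p * #B - ∑ i ∈ I, p ^ #(D i) = ∑ T ∈ B.powerset, w T * gain T := by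
        simp only [gain, mul_sub, Finset.sum_sub_distrib, hw_card]
        rw [sum_powerset_mul_card_filter_subset hD]
    _ ≤ ∑ T ∈ B.powerset, w T * gain S :=
        Finset.sum_le_sum fun T hT ↦ mul_le_mul_of_nonneg_left (hmax T hT) (hw T)
    _ = gain S := by rw [← Finset.sum_mul, hw_sum, one_mul]

omit [DecidableEq α] in
theorem exists_subset_forall_not_subset {B : Finset α} {I : Finset ι} {D : ι → Finset α}
    (hD : ∀ i ∈ I, D i ⊆ B) (hne : ∀ i ∈ I, (D i).Nonempty) {p : ℝ} (hp₀ : 0 ≤ p) (hp₁ : p ≤ 1) :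
    ∃ S ⊆ B, (∀ i ∈ I, ¬ D i ⊆ S) ∧ p * #B - ∑ i ∈ I, p ^ #(D i) ≤ #S := by
  classical
  obtain ⟨S, hSB, hS⟩ := exists_subset_le_card_sub_card_filter hD hp₀ hp₁
  obtain ⟨V, hV, hVS⟩ : ∃ V : Finset α, (∀ i ∈ I, D i ⊆ S → ∃ x ∈ D i, x ∈ V) ∧
      #V ≤ #{i ∈ I | D i ⊆ S} := by
    choose x hx using hne
    refine ⟨Finset.univ.image fun i : ↥({i ∈ I | D i ⊆ S} : Finset ι) ↦
      x i (Finset.mem_filter.mp i.2).1, fun i hi hiS ↦ ⟨x i hi, hx i hi, ?_⟩,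
      Finset.card_image_le.trans (Fintype.card_coe _).le⟩
    exact Finset.mem_image.mpr ⟨⟨i, Finset.mem_filter.mpr ⟨hi, hiS⟩⟩, Finset.mem_univ _, rfl⟩
  refine ⟨S \ V, Finset.sdiff_subset.trans hSB, fun i hi hiS ↦ ?_, hS.trans ?_⟩
  · obtain ⟨x, hx, hxV⟩ := hV i hi (hiS.trans Finset.sdiff_subset)
    exact (Finset.mem_sdiff.mp (hiS hx)).2 hxV
  · have hcard : #S ≤ #(S \ V) + #{i ∈ I | D i ⊆ S} :=
      (tsub_le_iff_right.mp (Finset.le_card_sdiff V S)).trans (Nat.add_le_add_left hVS _)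
    rw [sub_le_iff_le_add]
    exact_mod_cast hcard

theorem exists_card_eq_disjoint_image {X : Finset α} {f : α → α} (hf : Set.InjOn f X)
    (hfix : ∀ x ∈ X, f x ≠ x) {k : ℕ} (hk : 3 * k ≤ #X) :
    ∃ D ⊆ X, #D = k ∧ Disjoint D (D.image f) := by
  obtain ⟨D, hD, hmax⟩ := Finset.exists_max_image {D ∈ X.powerset | Disjoint D (D.image f)}
    Finset.card ⟨∅, by simp⟩
  obtain ⟨hDX, hdisj⟩ : D ⊆ X ∧ Disjoint D (D.image f) := by simpa using hD
  have hcover : X ⊆ D ∪ (D.image f ∪ {x ∈ X | f x ∈ D}) := by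
    intro x hx
    by_contra hx'
    simp only [Finset.mem_union, Finset.mem_filter, not_or, not_and] at hx'
    obtain ⟨hxD, hxf, hfx⟩ := hx'
    have hins : insert x D ∈ ({D ∈ X.powerset | Disjoint D (D.image f)} : Finset (Finset α)) := by
      rw [Finset.mem_filter, Finset.mem_powerset, Finset.image_insert,
        Finset.disjoint_insert_left, Finset.disjoint_insert_right, Finset.mem_insert, not_or]
      exact ⟨Finset.insert_subset hx hDX, ⟨(hfix x hx).symm, hxf⟩, hfx hx, hdisj⟩
    have := hmax _ hins
    rw [Finset.card_insert_of_notMem hxD] at this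
    omega
  have hpre : #{x ∈ X | f x ∈ D} ≤ #D :=
    Finset.card_le_card_of_injOn f (fun x hx ↦ (Finset.mem_filter.mp hx).2)
      (hf.mono fun x hx ↦ (Finset.mem_filter.mp hx).1)
  have hXD : k ≤ #D := by
    have := (Finset.card_le_card hcover).trans (Finset.card_union_le _ _)
    have := Finset.card_union_le (D.image f) {x ∈ X | f x ∈ D}
    have := Finset.card_image_le (s := D) (f := f)
    omega
  obtain ⟨D', hD', rfl⟩ := Finset.exists_subset_card_eq hXD
  exact ⟨D', hD'.trans hDX, rfl, Finset.disjoint_of_subset_left hD'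
    (Finset.disjoint_of_subset_right (Finset.image_subset_image hD') hdisj)⟩

end Deletion

section Sidon

variable {F : Type*}

theorem mulPairCount_eq_card_filter [Mul F] [DecidableEq F] (l : F) (S : Finset F) :
    mulPairCount l S = #{x ∈ S | l * x ∈ S} := by
  have himage : {q : F × F | q.1 ∈ S ∧ q.2 ∈ S ∧ q.1 = l * q.2} =
      ({x ∈ S | l * x ∈ S}.image fun x ↦ (l * x, x) : Finset (F × F)) := by
    ext ⟨y, x⟩
    simp only [Set.mem_ofPred_eq, Finset.coe_image, Finset.coe_filter, Set.mem_image,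
      Prod.mk.injEq]
    grind
  rw [mulPairCount, himage, Set.ncard_coe_finset,
    Finset.card_image_of_injective _ fun _ _ h ↦ (Prod.mk.inj h).2]

theorem mulPairCount_le_card [Mul F] (l : F) (S : Finset F) : mulPairCount l S ≤ #S := by
  classical
  rw [mulPairCount_eq_card_filter]
  exact Finset.card_filter_le _ _

theorem mulPairCount_mono [Mul F] {S B : Finset F} (h : S ⊆ B) (l : F) :
    mulPairCount l S ≤ mulPairCount l B := by
  classical
  simp only [mulPairCount_eq_card_filter]
  exact Finset.card_le_card fun x hx ↦ by
    have := Finset.mem_filter.mp hx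
    exact Finset.mem_filter.mpr ⟨h this.1, h this.2⟩

theorem IsMulSidon.of_card_le [MulOneClass F] {K : ℝ} {S : Finset F} (h : #S ≤ K) :
    IsMulSidon K S :=
  fun l _ ↦ (Nat.cast_le.mpr (mulPairCount_le_card l S)).trans h

theorem IsMulSidon.mono [MulOneClass F] {K K' : ℝ} {S : Finset F} (hS : IsMulSidon K S)
    (hK : K ≤ K') : IsMulSidon K' S :=
  fun l hl ↦ (hS l hl).trans hK

variable [GroupWithZero F] [DecidableEq F] {B S : Finset F} {l : F}

/-- The vertex sets of the `k`-edge matchings in the graph on `B` whose edges join `x` to `l * x`;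
a subset of `B` containing none of them has few pairs of ratio `l`. -/
def dilateMatchings (B : Finset F) (l : F) (k : ℕ) : Finset (Finset F) :=
  {D ∈ {x ∈ B | l * x ∈ B}.powersetCard k | Disjoint D (D.image (l * ·))}.image
    fun D ↦ D ∪ D.image (l * ·)

theorem card_dilateMatchings_le (B : Finset F) (l : F) (k : ℕ) :
    #(dilateMatchings B l k) ≤ mulPairCount l B ^ k := by
  refine Finset.card_image_le.trans ((Finset.card_filter_le _ _).trans ?_)
  rw [Finset.card_powersetCard, mulPairCount_eq_card_filter]
  exact Nat.choose_le_pow _ _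

theorem subset_of_mem_dilateMatchings {k : ℕ} {D : Finset F} (hD : D ∈ dilateMatchings B l k) :
    D ⊆ B := by
  obtain ⟨D, hD', rfl⟩ := Finset.mem_image.mp hD
  have hDB := (Finset.mem_powersetCard.mp (Finset.mem_filter.mp hD').1).1
  refine Finset.union_subset (hDB.trans (Finset.filter_subset _ _)) ?_
  exact Finset.image_subset_iff.mpr fun x hx ↦ (Finset.mem_filter.mp (hDB hx)).2

theorem card_of_mem_dilateMatchings (hl : l ≠ 0) {k : ℕ} {D : Finset F}
    (hD : D ∈ dilateMatchings B l k) : #D = 2 * k := by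
  obtain ⟨D, hD', rfl⟩ := Finset.mem_image.mp hD
  obtain ⟨hDk, hdisj⟩ := Finset.mem_filter.mp hD'
  rw [Finset.card_union_of_disjoint hdisj,
    Finset.card_image_of_injective _ (mul_right_injective₀ hl),
    (Finset.mem_powersetCard.mp hDk).2, two_mul]

theorem exists_mem_dilateMatchings_subset (hSB : S ⊆ B) (hS₀ : 0 ∉ S) (hl₀ : l ≠ 0) (hl₁ : l ≠ 1)
    {k : ℕ} (hk : 3 * k ≤ mulPairCount l S) : ∃ D ∈ dilateMatchings B l k, D ⊆ S := by
  rw [mulPairCount_eq_card_filter] at hk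
  have hfix : ∀ x ∈ ({x ∈ S | l * x ∈ S} : Finset F), l * x ≠ x := fun x hx h ↦
    hl₁ ((mul_eq_right₀ (ne_of_mem_of_not_mem (Finset.mem_filter.mp hx).1 hS₀)).mp h)
  obtain ⟨D, hDS, hDk, hdisj⟩ :=
    exists_card_eq_disjoint_image (mul_right_injective₀ hl₀).injOn hfix hk
  have hDB : D ⊆ {x ∈ B | l * x ∈ B} := fun x hx ↦ by
    have := Finset.mem_filter.mp (hDS hx)
    exact Finset.mem_filter.mpr ⟨hSB this.1, hSB this.2⟩
  refine ⟨D ∪ D.image (l * ·), Finset.mem_image_of_mem _ (Finset.mem_filter.mpr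
    ⟨Finset.mem_powersetCard.mpr ⟨hDB, hDk⟩, hdisj⟩), Finset.union_subset
    (hDS.trans (Finset.filter_subset _ _)) (Finset.image_subset_iff.mpr fun x hx ↦ ?_)⟩
  exact (Finset.mem_filter.mp (hDS hx)).2

theorem ne_zero_of_mem_div (hB : 0 ∉ B) (hl : l ∈ B / B) : l ≠ 0 := by
  obtain ⟨x, hx, y, hy, rfl⟩ := Finset.mem_div.mp hl
  exact div_ne_zero (ne_of_mem_of_not_mem hx hB) (ne_of_mem_of_not_mem hy hB)

theorem mem_div_of_mulPairCount_pos (hB : 0 ∉ B) (hl : 0 < mulPairCount l B) : l ∈ B / B := by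
  rw [mulPairCount_eq_card_filter] at hl
  obtain ⟨x, hx⟩ := Finset.card_pos.mp hl
  obtain ⟨hxB, hlx⟩ := Finset.mem_filter.mp hx
  exact Finset.mem_div.mpr ⟨_, hlx, x, hxB, mul_div_cancel_right₀ l (ne_of_mem_of_not_mem hxB hB)⟩

theorem exists_isMulSidon_subset (hB : 0 ∉ B) {k : ℕ} (κ : F → ℕ) (hκ₁ : ∀ l, 1 ≤ κ l)
    (hκ : ∀ l, κ l ≤ k) {p : ℝ} (hp₀ : 0 ≤ p) (hp₁ : p ≤ 1) :
    ∃ S ⊆ B, IsMulSidon (3 * k) S ∧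
      p * #B - ∑ l ∈ (B / B).erase 1, (p ^ 2 * mulPairCount l B) ^ κ l ≤ #S := by
  set E := ((B / B).erase 1).sigma fun l ↦ dilateMatchings B l (κ l)
  have hl₀ : ∀ l ∈ (B / B).erase 1, l ≠ 0 := fun l hl ↦
    ne_zero_of_mem_div hB (Finset.mem_of_mem_erase hl)
  have hEB : ∀ e ∈ E, e.2 ⊆ B := fun e he ↦
    subset_of_mem_dilateMatchings (Finset.mem_sigma.mp he).2
  have hEcard : ∀ l ∈ (B / B).erase 1, ∀ D ∈ dilateMatchings B l (κ l), #D = 2 * κ l :=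
    fun l hl D hD ↦ card_of_mem_dilateMatchings (hl₀ l hl) hD
  have hEne : ∀ e ∈ E, e.2.Nonempty := fun e he ↦ by
    rw [← Finset.card_pos, hEcard e.1 (Finset.mem_sigma.mp he).1 _ (Finset.mem_sigma.mp he).2]
    have := hκ₁ e.1
    omega
  have hcost : ∑ e ∈ E, p ^ #e.2 ≤ ∑ l ∈ (B / B).erase 1, (p ^ 2 * mulPairCount l B) ^ κ l := by
    rw [Finset.sum_sigma]
    refine Finset.sum_le_sum fun l hl ↦ ?_
    rw [Finset.sum_congr rfl fun D hD ↦ congrArg (p ^ ·) (hEcard l hl D hD), Finset.sum_const,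
      nsmul_eq_mul, mul_comm, mul_pow, ← pow_mul]
    gcongr
    exact_mod_cast card_dilateMatchings_le B l (κ l)
  obtain ⟨S, hSB, hES, hS⟩ := exists_subset_forall_not_subset (I := E) (D := fun e ↦ e.2)
    hEB hEne hp₀ hp₁
  refine ⟨S, hSB, fun l hl₁ ↦ ?_, by linarith⟩
  by_contra! hlt
  have hlt' : 3 * k < mulPairCount l S := by exact_mod_cast hlt
  have hlB : l ∈ (B / B).erase 1 := Finset.mem_erase.mpr ⟨hl₁,
    mem_div_of_mulPairCount_pos hB
      ((Nat.zero_le _).trans_lt (hlt'.trans_le (mulPairCount_mono hSB l)))⟩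
  obtain ⟨D, hD, hDS⟩ := exists_mem_dilateMatchings_subset hSB (fun h ↦ hB (hSB h)) (hl₀ l hlB) hl₁
    (k := κ l) (by have := hκ l; omega)
  exact hES ⟨l, D⟩ (Finset.mem_sigma.mpr ⟨hlB, hD⟩) hDS

theorem exists_isMulSidon_subset_of_popular (hB : 0 ∉ B) {k : ℕ} (hk : 1 ≤ k) {p M : ℝ}
    (hp₀ : 0 ≤ p) (hp₁ : p ≤ 1) (hM : 0 ≤ M) :
    ∃ S ⊆ B, IsMulSidon (3 * k) S ∧
      p * #B - #{l ∈ (B / B).erase 1 | M ≤ mulPairCount l B} * (p ^ 2 * #B) -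
        #B ^ 2 * (p ^ 2 * M) ^ k ≤ #S := by
  set L := (B / B).erase 1
  -- For a popular dilation even single pairs are forbidden, since few dilations are popular.
  obtain ⟨S, hSB, hS, hcard⟩ := exists_isMulSidon_subset hB (k := k)
    (fun l ↦ if M ≤ mulPairCount l B then 1 else k)
    (fun l ↦ by split_ifs <;> omega) (fun l ↦ by split_ifs <;> omega) hp₀ hp₁
  refine ⟨S, hSB, hS, le_trans ?_ hcard⟩
  have hpopular : ∑ l ∈ L with M ≤ mulPairCount l B, p ^ 2 * (mulPairCount l B : ℝ) ≤
      #{l ∈ L | M ≤ mulPairCount l B} * (p ^ 2 * #B) := by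
    rw [← nsmul_eq_mul]
    refine Finset.sum_le_card_nsmul _ _ _ fun l _ ↦ ?_
    gcongr
    exact mulPairCount_le_card l B
  have hunpopular : ∑ l ∈ L with ¬ M ≤ mulPairCount l B, (p ^ 2 * (mulPairCount l B : ℝ)) ^ k ≤
      #B ^ 2 * (p ^ 2 * M) ^ k :=
    calc ∑ l ∈ L with ¬ M ≤ mulPairCount l B, (p ^ 2 * (mulPairCount l B : ℝ)) ^ k
        ≤ #{l ∈ L | ¬ M ≤ mulPairCount l B} * (p ^ 2 * M) ^ k := by
          rw [← nsmul_eq_mul]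
          refine Finset.sum_le_card_nsmul _ _ _ fun l hl ↦ ?_
          gcongr
          exact (not_le.mp (Finset.mem_filter.mp hl).2).le
      _ ≤ #B ^ 2 * (p ^ 2 * M) ^ k := by
          gcongr
          rw [sq]
          exact_mod_cast (Finset.card_filter_le _ _).trans
            ((Finset.card_le_card (Finset.erase_subset _ _)).trans Finset.card_div_le)
  have hsplit : ∑ l ∈ L, (p ^ 2 * (mulPairCount l B : ℝ)) ^
        (if M ≤ mulPairCount l B then 1 else k) =
      ∑ l ∈ L with M ≤ mulPairCount l B, p ^ 2 * (mulPairCount l B : ℝ) +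
        ∑ l ∈ L with ¬ M ≤ mulPairCount l B, (p ^ 2 * (mulPairCount l B : ℝ)) ^ k := by
    simp only [pow_ite, pow_one, Finset.sum_ite]
  linarith

theorem exists_isMulSidon_subset_of_card_popular_le (hB : 0 ∉ B) {N t β : ℝ} {k : ℕ} (hN : 1 ≤ N)
    (hBN : #B ≤ N ^ 2) (hβB : N ^ 2 * β ≤ #B) (hβ : 0 < β) (ht : 2 ≤ t) (htN : t ^ 2 ≤ N * β)
    (hk : 1 ≤ k) (hNk : N ^ 4 ≤ t ^ k)
    (hpop : #{l ∈ (B / B).erase 1 | N ^ 2 * (β ^ 2 / t ^ 5) ≤ mulPairCount l B} ≤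
      N * (β ^ 2 / t ^ 4)) :
    ∃ S ⊆ B, IsMulSidon (3 * k) S ∧ N * t ≤ #S := by
  set P := {l ∈ (B / B).erase 1 | N ^ 2 * (β ^ 2 / t ^ 5) ≤ mulPairCount l B}
  set p := t ^ 2 / (N * β) with hp
  have hp₀ : 0 ≤ p := by positivity
  have hp₁ : p ≤ 1 := (div_le_one (by positivity)).mpr htN
  obtain ⟨S, hSB, hS, hcard⟩ := exists_isMulSidon_subset_of_popular hB hk hp₀ hp₁
    (show 0 ≤ N ^ 2 * (β ^ 2 / t ^ 5) by positivity)
  refine ⟨S, hSB, hS, le_trans ?_ hcard⟩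
  have hpB : N * t ^ 2 ≤ p * #B :=
    calc N * t ^ 2 = p * (N ^ 2 * β) := by rw [hp]; field_simp
      _ ≤ p * #B := by gcongr
  have hpopular : #P * (p ^ 2 * #B) ≤ N :=
    calc #P * (p ^ 2 * #B) ≤ N * (β ^ 2 / t ^ 4) * (p ^ 2 * N ^ 2) := by gcongr
      _ = N := by rw [hp]; field_simp
  have hunpopular : #B ^ 2 * (p ^ 2 * (N ^ 2 * (β ^ 2 / t ^ 5))) ^ k ≤ 1 :=
    calc #B ^ 2 * (p ^ 2 * (N ^ 2 * (β ^ 2 / t ^ 5))) ^ k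
        = #B ^ 2 * (1 / t) ^ k := by rw [hp]; field_simp
      _ ≤ (N ^ 2) ^ 2 * (1 / t) ^ k := by gcongr
      _ ≤ 1 := by
        rw [one_div_pow, mul_one_div, div_le_one (by positivity)]
        linarith
  nlinarith [mul_le_mul_of_nonneg_left ht (show 0 ≤ N * t by positivity)]

omit [DecidableEq F] in
theorem exists_isMulSidon_or_exists_popular (hB : 0 ∉ B) {N t β : ℝ} {k : ℕ} (hBN : #B ≤ N ^ 2)
    (hβB : N ^ 2 * β ≤ #B) (hβ₀ : 0 < β) (hβ₁ : β ≤ 1) (ht : 2 ≤ t) (htN : t ^ 2 ≤ N * β)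
    (hNk : N ^ 4 ≤ t ^ k) :
    (∃ S ⊆ B, IsMulSidon (3 * k) S ∧ N * t ≤ #S) ∨
      ∃ L : Finset F, 0 ∉ L ∧ (∀ l ∈ L, N ^ 2 * (β ^ 2 / t ^ 5) ≤ mulPairCount l B) ∧
        N * (β ^ 2 / t ^ 4) ≤ #L ∧ #L ≤ N := by
  classical
  have hN : 4 ≤ N := by nlinarith
  have hk : 1 ≤ k := Nat.one_le_iff_ne_zero.mpr fun h ↦ by
    have : (1 : ℝ) < N ^ 4 := one_lt_pow₀ (by linarith) (by norm_num)
    rw [h, pow_zero] at hNk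
    linarith
  rcases le_total (#{l ∈ (B / B).erase 1 | N ^ 2 * (β ^ 2 / t ^ 5) ≤ mulPairCount l B} : ℝ)
    (N * (β ^ 2 / t ^ 4)) with hP | hP
  · exact .inl (exists_isMulSidon_subset_of_card_popular_le hB (by linarith) hBN hβB hβ₀ ht htN hk
      hNk hP)
  right
  obtain ⟨L, hLP, hL⟩ := Finset.exists_subset_card_eq (Nat.ceil_le.mpr hP)
  refine ⟨L, fun h ↦ ?_, fun l hl ↦ (Finset.mem_filter.mp (hLP hl)).2, hL ▸ Nat.le_ceil _, ?_⟩
  · have := (Finset.mem_filter.mp (hLP h)).1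
    exact ne_zero_of_mem_div hB (Finset.mem_of_mem_erase this) rfl
  · have hratio : β ^ 2 / t ^ 4 ≤ 1 / 2 := by
      rw [div_le_iff₀ (by positivity)]
      have : (2 : ℝ) ^ 4 ≤ t ^ 4 := by gcongr
      nlinarith
    have := Nat.ceil_lt_add_one (show 0 ≤ N * (β ^ 2 / t ^ 4) by positivity)
    rw [hL]
    nlinarith

theorem exists_isMulSidon_or_exists_popular_subset {A : Finset F} (h₀ : 0 ∉ A) {N t : ℝ}
    {k : ℕ} (hA : #A = N ^ 2) (ht : 2 ≤ t) (htN : t ^ 2 ≤ N) (hNk : N ^ 4 ≤ t ^ k) :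
    (∃ S ⊆ A, IsMulSidon (3 * k) S ∧ N * t ≤ #S) ∨
      ∃ L : Finset F, 0 ∉ L ∧ #L ≤ N ∧ ∃ B ⊆ A, N ^ 2 * (t ^ 10)⁻¹ ≤ #B ∧
        ∀ b ∈ B, N * (t ^ 10)⁻¹ ≤ #{l ∈ L | l * b ∈ A} := by
  have hN : 0 < N := by nlinarith
  refine (exists_isMulSidon_or_exists_popular h₀ hA.le (by rw [mul_one, hA]) one_pos le_rfl ht
    (by rwa [mul_one]) hNk).imp_right ?_
  rintro ⟨L, hL₀, hpop, hL, hLN⟩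
  refine ⟨L, hL₀, hLN, {b ∈ A | N * (t ^ 10)⁻¹ ≤ #{l ∈ L | l * b ∈ A}}, Finset.filter_subset _ _,
    ?_, fun b hb ↦ (Finset.mem_filter.mp hb).2⟩
  refine le_card_filter_of_le_card_filter (fun b l ↦ l * b ∈ A) hA.le hN hLN hL
    (b := 1 ^ 2 / t ^ 5) (by positivity) (fun l hl ↦ ?_) (by positivity) ?_
  · rw [← mulPairCount_eq_card_filter]
    exact hpop l hl
  · calc 2 * (t ^ 10)⁻¹ ≤ t * (t ^ 10)⁻¹ := by gcongr
      _ = 1 ^ 2 / t ^ 4 * (1 ^ 2 / t ^ 5) := by field_simp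

end Sidon

section Order

variable {α : Type*} [LinearOrder α]

theorem strictMonoOn_card_filter_lt (P : Finset α) :
    StrictMonoOn (fun x ↦ #{y ∈ P | y < x}) P := fun x hx x' _ hlt ↦ by
  refine Finset.card_lt_card (Finset.ssubset_iff_of_subset
    (Finset.monotone_filter_right P fun y _ hy ↦ hy.trans hlt) |>.mpr ⟨x, ?_, ?_⟩)
  · exact Finset.mem_filter.mpr ⟨hx, hlt⟩
  · simp

theorem card_filter_rank_div_eq_le (P : Finset α) {v : ℕ} (hv : 0 < v) :
    #{z ∈ P ×ˢ P | #{y ∈ P | y < z.1} / v = #{y ∈ P | y < z.2} / v} ≤ #P * v := by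
  have hclass : ∀ x ∈ P, #{x' ∈ P | #{y ∈ P | y < x} / v = #{y ∈ P | y < x'} / v} ≤ v :=
    fun x _ ↦ by
    set c := #{y ∈ P | y < x} / v
    calc #{x' ∈ P | c = #{y ∈ P | y < x'} / v} ≤ #(Finset.Ico (c * v) (c * v + v)) := by
          refine Finset.card_le_card_of_injOn (fun x' ↦ #{y ∈ P | y < x'}) (fun x' hx' ↦ ?_)
            ((strictMonoOn_card_filter_lt P).injOn.mono (Finset.filter_subset _ _))
          rw [(Finset.mem_filter.mp hx').2]
          exact Finset.mem_Ico.mpr ⟨Nat.div_mul_le_self _ _, Nat.lt_div_mul_add hv⟩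
      _ = v := by rw [Nat.card_Ico, Nat.add_sub_cancel_left]
  rw [Finset.card_filter, Finset.sum_product]
  simp only [← Finset.card_filter]
  exact Finset.sum_le_card_nsmul _ _ _ hclass

theorem exists_monotone_coloring (P : Finset α) {k : ℝ} (hk₀ : 0 < k) (hk : k ≤ #P) :
    ∃ r : α → ℕ, Monotone r ∧ (∀ x, (r x : ℝ) ≤ k / 8) ∧
      #{z ∈ P ×ˢ P | r z.1 = r z.2} * k ≤ 9 * (#P : ℝ) ^ 2 := by
  have hP : (0 : ℝ) < #P := hk₀.trans_le hk
  set v := ⌈8 * (#P : ℝ) / k⌉₊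
  have hv₀ : 0 < v := Nat.ceil_pos.mpr (by positivity)
  have hv : 8 * (#P : ℝ) ≤ v * k := (div_le_iff₀ hk₀).mp (Nat.le_ceil _)
  have hv' : v * k ≤ 9 * (#P : ℝ) :=
    calc v * k ≤ (8 * (#P : ℝ) / k + 1) * k := by
          gcongr
          exact (Nat.ceil_lt_add_one (by positivity)).le
      _ = 8 * #P + k := by field_simp
      _ ≤ 9 * #P := by linarith
  refine ⟨fun x ↦ #{y ∈ P | y < x} / v, fun x x' hxx' ↦ ?_, fun x ↦ ?_, ?_⟩
  · exact Nat.div_le_div_right (Finset.card_le_card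
      (Finset.monotone_filter_right P fun y _ hy ↦ lt_of_lt_of_le hy hxx'))
  · calc ((#{y ∈ P | y < x} / v : ℕ) : ℝ) ≤ (#{y ∈ P | y < x} : ℝ) / v := Nat.cast_div_le
      _ ≤ #P / v := by gcongr; exact Finset.filter_subset _ _
      _ ≤ k / 8 := by
        rw [div_le_div_iff₀ (by positivity) (by positivity)]
        linarith
  · calc #{z ∈ P ×ˢ P | #{y ∈ P | y < z.1} / v = #{y ∈ P | y < z.2} / v} * k
        ≤ #P * v * k := by
          gcongr
          exact_mod_cast card_filter_rank_div_eq_le P hv₀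
      _ ≤ 9 * (#P : ℝ) ^ 2 := by nlinarith

theorem card_image_prodMk_le_of_monotone {I : Finset α} {f g : α → ℕ} {a b : ℕ} (hf : Monotone f)
    (hg : Monotone g) (hfa : ∀ x ∈ I, f x ≤ a) (hgb : ∀ x ∈ I, g x ≤ b) :
    #(I.image fun x ↦ (f x, g x)) ≤ a + b + 1 := by
  rw [← Finset.card_range (a + b + 1)]
  refine Finset.card_le_card_of_injOn (fun c ↦ c.1 + c.2) ?_ ?_
  · rintro _ hc
    obtain ⟨x, hx, rfl⟩ := Finset.mem_image.mp hc
    have := hfa x hx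
    have := hgb x hx
    simp only [Finset.coe_range, Set.mem_Iio]
    omega
  · rintro _ hc _ hc' heq
    obtain ⟨x, -, rfl⟩ := Finset.mem_image.mp hc
    obtain ⟨y, -, rfl⟩ := Finset.mem_image.mp hc'
    simp only at heq
    rcases le_total x y with hxy | hxy
    all_goals
      have := hf hxy
      have := hg hxy
      exact Prod.ext (by simp only; omega) (by simp only; omega)

theorem card_image_prodMk_le_of_antitone {I : Finset α} {f g : α → ℕ} {a b : ℕ} (hf : Monotone f)
    (hg : Antitone g) (hfa : ∀ x ∈ I, f x ≤ a) (hgb : ∀ x ∈ I, g x ≤ b) :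
    #(I.image fun x ↦ (f x, g x)) ≤ a + b + 1 := by
  have hreflect : (I.image fun x ↦ (f x, g x)) =
      (I.image fun x ↦ (f x, b - g x)).image fun c ↦ (c.1, b - c.2) := by
    rw [Finset.image_image]
    exact Finset.image_congr fun x hx ↦ by simp [Nat.sub_sub_self (hgb x hx)]
  rw [hreflect]
  exact Finset.card_image_le.trans (card_image_prodMk_le_of_monotone hf
    (fun x y hxy ↦ Nat.sub_le_sub_left (hg hxy) b) hfa fun x _ ↦ Nat.sub_le _ _)

end Order

section RichLines

variable {F : Type*} [Field F]

/-- The abscissae of the points of the grid `P × Q` on the line `ℓ`, where a pair `ℓ` encodes the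
line `y = ℓ.1 * x + ℓ.2`. -/
def linePoints [DecidableEq F] (P Q : Finset F) (ℓ : F × F) : Finset F :=
  {x ∈ P | ℓ.1 * x + ℓ.2 ∈ Q}

theorem sum_card_filter_offDiag_le [DecidableEq F] (L : Finset (F × F)) (P Q : Finset F)
    (r s : F → ℕ) :
    ∑ ℓ ∈ L, #{z ∈ (linePoints P Q ℓ).offDiag |
        (r z.1, s (ℓ.1 * z.1 + ℓ.2)) = (r z.2, s (ℓ.1 * z.2 + ℓ.2))} ≤
      #{z ∈ P ×ˢ P | r z.1 = r z.2} * #{z ∈ Q ×ˢ Q | s z.1 = s z.2} := by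
  rw [← Finset.card_sigma, ← Finset.card_product]
  refine Finset.card_le_card_of_injOn
    (fun e ↦ (e.2, (e.1.1 * e.2.1 + e.1.2, e.1.1 * e.2.2 + e.1.2))) ?_ ?_
  · rintro ⟨ℓ, z⟩ he
    simp only [Finset.coe_sigma, Set.mem_sigma_iff, Finset.mem_coe, Finset.mem_filter,
      Finset.mem_offDiag, linePoints, Prod.mk.injEq] at he
    simp only [Finset.coe_product, Set.mem_prod, Finset.mem_coe, Finset.mem_filter,
      Finset.mem_product]
    tauto
  · rintro ⟨⟨m, c⟩, x, y⟩ he ⟨⟨m', c'⟩, x', y'⟩ - heq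
    have hxy : x ≠ y := (Finset.mem_offDiag.mp
      (Finset.mem_filter.mp (Finset.mem_sigma.mp he).2).1).2.2
    simp only [Prod.mk.injEq] at heq
    obtain ⟨⟨rfl, rfl⟩, h₁, h₂⟩ := heq
    have hm : m = m' := mul_right_cancel₀ (sub_ne_zero.mpr hxy) (by linear_combination h₁ - h₂)
    subst hm
    simp [add_left_cancel h₁]

variable [LinearOrder F] [IsStrictOrderedRing F] {P Q : Finset F} {k : ℝ}

theorem card_image_linePoints_le {r s : F → ℕ} {a b : ℕ} (hr : Monotone r) (hs : Monotone s)
    (ha : ∀ x, r x ≤ a) (hb : ∀ x, s x ≤ b) (I : Finset F) (ℓ : F × F) :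
    #(I.image fun x ↦ (r x, s (ℓ.1 * x + ℓ.2))) ≤ a + b + 1 := by
  rcases le_total 0 ℓ.1 with hℓ | hℓ
  · refine card_image_prodMk_le_of_monotone hr (hs.comp fun x y hxy ↦ ?_) (fun x _ ↦ ha x)
      fun x _ ↦ hb _
    gcongr
  · refine card_image_prodMk_le_of_antitone hr (hs.comp_antitone fun x y hxy ↦ ?_)
      (fun x _ ↦ ha x) fun x _ ↦ hb _
    exact add_le_add_left (mul_le_mul_of_nonpos_left hxy hℓ) _

theorem card_mul_pow_three_le_of_rich (hk₄ : 4 ≤ k) {L : Finset (F × F)}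
    (hslope : ∀ ℓ ∈ L, ℓ.1 ≠ 0) (hrich : ∀ ℓ ∈ L, k ≤ #(linePoints P Q ℓ)) :
    #L * k ^ 3 ≤ 81 * (#P : ℝ) ^ 2 * (#Q : ℝ) ^ 2 := by
  rcases L.eq_empty_or_nonempty with rfl | ⟨ℓ₀, hℓ₀⟩
  · simp only [Finset.card_empty, Nat.cast_zero, zero_mul]
    positivity
  have hkP : k ≤ #P := (hrich ℓ₀ hℓ₀).trans (Nat.cast_le.mpr (Finset.card_filter_le _ _))
  have hkQ : k ≤ #Q := by
    refine (hrich ℓ₀ hℓ₀).trans (Nat.cast_le.mpr (Finset.card_le_card_of_injOn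
      (fun x ↦ ℓ₀.1 * x + ℓ₀.2) (fun x hx ↦ (Finset.mem_filter.mp hx).2) ?_))
    exact fun x _ y _ h ↦ mul_left_cancel₀ (hslope ℓ₀ hℓ₀) (add_right_cancel h)
  obtain ⟨r, hr, hrk, hr_pairs⟩ := exists_monotone_coloring P (by linarith) hkP
  obtain ⟨s, hs, hsk, hs_pairs⟩ := exists_monotone_coloring Q (by linarith) hkQ
  -- A line crosses the coloured grid monotonically, so it meets at most `k / 4 + 1` of its cells
  -- and must have many pairs of points in a common cell; two points determine the line.
  have hcollide : ∀ ℓ ∈ L, k ≤ #{z ∈ (linePoints P Q ℓ).offDiag |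
      (r z.1, s (ℓ.1 * z.1 + ℓ.2)) = (r z.2, s (ℓ.1 * z.2 + ℓ.2))} := fun ℓ hℓ ↦ by
    have hcells := card_image_linePoints_le hr hs (fun x ↦ Nat.le_floor (hrk x))
      (fun x ↦ Nat.le_floor (hsk x)) (linePoints P Q ℓ) ℓ
    have hfloor := Nat.floor_le (show 0 ≤ k / 8 by linarith)
    have hpairs := two_mul_card_le_two_mul_card_image_add (linePoints P Q ℓ)
      fun x ↦ (r x, s (ℓ.1 * x + ℓ.2))
    have := hrich ℓ hℓ
    rify at hcells hpairs
    linarith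
  have hcount : #L * k ≤ #{z ∈ P ×ˢ P | r z.1 = r z.2} * #{z ∈ Q ×ˢ Q | s z.1 = s z.2} := by
    rw [← nsmul_eq_mul]
    exact (Finset.card_nsmul_le_sum _ _ _ hcollide).trans
      (by exact_mod_cast sum_card_filter_offDiag_le L P Q r s)
  calc #L * k ^ 3 = #L * k * k ^ 2 := by ring
    _ ≤ #{z ∈ P ×ˢ P | r z.1 = r z.2} * #{z ∈ Q ×ˢ Q | s z.1 = s z.2} * k ^ 2 := by gcongr
    _ = (#{z ∈ P ×ˢ P | r z.1 = r z.2} * k) * (#{z ∈ Q ×ˢ Q | s z.1 = s z.2} * k) := by ring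
    _ ≤ 9 * (#P : ℝ) ^ 2 * (9 * (#Q : ℝ) ^ 2) := by gcongr
    _ = 81 * (#P : ℝ) ^ 2 * (#Q : ℝ) ^ 2 := by ring

theorem card_mul_pow_three_le_of_injOn {ι : Type*} {I : Finset ι} {ℓ : ι → F × F}
    (hℓ : Set.InjOn ℓ I) (hk₄ : 4 ≤ k) (hslope : ∀ i ∈ I, (ℓ i).1 ≠ 0)
    (hrich : ∀ i ∈ I, k ≤ #(linePoints P Q (ℓ i))) :
    #I * k ^ 3 ≤ 81 * (#P : ℝ) ^ 2 * (#Q : ℝ) ^ 2 := by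
  rw [← Finset.card_image_of_injOn hℓ]
  exact card_mul_pow_three_le_of_rich hk₄ (Finset.forall_mem_image.mpr hslope)
    (Finset.forall_mem_image.mpr hrich)

end RichLines

section Core

variable {F : Type*} [Field F] [DecidableEq F] {A B L M : Finset F} {N α β γ : ℝ}

theorem card_filter_le_card_linePoints {s : F} (hs : s ≠ 0) (s' t t' : F) (P Q Q' : Finset F) :
    #{x ∈ P | s * x + t ∈ Q ∧ s' * x + t' ∈ Q'} ≤ #(linePoints Q Q' (s' / s, t' - s' / s * t)) := by
  refine Finset.card_le_card_of_injOn (fun x ↦ s * x + t) (fun x hx ↦ ?_) fun x _ y _ h ↦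
    mul_left_cancel₀ hs (add_right_cancel h)
  obtain ⟨-, hQ, hQ'⟩ := Finset.mem_filter.mp hx
  refine Finset.mem_filter.mpr ⟨hQ, ?_⟩
  convert hQ' using 1
  field_simp
  ring

theorem card_linePoints_le (P Q : Finset F) (ℓ : F × F) : #(linePoints P Q ℓ) ≤ #P :=
  Finset.card_filter_le _ _

/- The line `(m, m - 1)` is the dilation `y + 1 = m * (x + 1)` of `B + 1`. Conjugating it by
dilations that map much of `B` into `A` gives the lines in `A × A` below. -/
theorem le_card_filter_rich_pairs (hA : #A ≤ N ^ 2) (hL : #L ≤ N) (hBA : B ⊆ A) (hL₀ : 0 ∉ L)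
    (hN : 0 < N) (hα : 0 ≤ α) (hγ : 0 ≤ γ) (hBL : ∀ b ∈ B, N * α ≤ #{l ∈ L | l * b ∈ A}) {m : F}
    (hm : N ^ 2 * γ ≤ #(linePoints B B (m, m - 1))) :
    N ^ 2 * (γ * α ^ 2 / 2) ≤ #{p ∈ L ×ˢ L |
      N ^ 2 * (γ * α ^ 2 / 2) ≤ #(linePoints A A (p.1 * m / p.2, p.1 * (m - 1)))} := by
  have hdeg : ∀ x ∈ linePoints B B (m, m - 1), N ^ 2 * α ^ 2 ≤
      #{p ∈ L ×ˢ L | p.1 * (m * x + (m - 1)) ∈ A ∧ p.2 * x ∈ A} := fun x hx ↦ by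
    obtain ⟨hxB, hyB⟩ := Finset.mem_filter.mp hx
    rw [Finset.filter_product (fun l ↦ l * (m * x + (m - 1)) ∈ A) (fun l ↦ l * x ∈ A),
      Finset.card_product, Nat.cast_mul, ← mul_pow, sq]
    gcongr
    exacts [hBL _ hyB, hBL _ hxB]
  have hLL : (#(L ×ˢ L) : ℝ) ≤ N ^ 2 := by
    rw [Finset.card_product, Nat.cast_mul, sq]
    gcongr
  have hBN : (#(linePoints B B (m, m - 1)) : ℝ) ≤ N ^ 2 := (Nat.cast_le.mpr
    ((card_linePoints_le _ _ _).trans (Finset.card_le_card hBA))).trans hA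
  refine (le_card_filter_of_le_card_filter _ hLL (by positivity) hBN hm (by positivity) hdeg
    (by positivity) (by linarith)).trans (Nat.cast_le.mpr (Finset.card_le_card ?_))
  refine fun p hp ↦ Finset.mem_filter.mpr ⟨(Finset.mem_filter.mp hp).1,
    (Finset.mem_filter.mp hp).2.trans (Nat.cast_le.mpr ?_)⟩
  have hp₂ : p.2 ≠ 0 := ne_of_mem_of_not_mem
    (Finset.mem_product.mp (Finset.mem_filter.mp hp).1).2 hL₀
  have hcomp := card_filter_le_card_linePoints hp₂ (p.1 * m) 0 (p.1 * (m - 1))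
    (linePoints B B (m, m - 1)) A A
  simpa only [mul_zero, sub_zero, add_zero, mul_assoc, ← mul_add, and_comm] using hcomp

theorem le_card_filter_rich_slopes (hA : #A ≤ N ^ 2) (hL : #L ≤ N) (hBA : B ⊆ A) (hL₀ : 0 ∉ L)
    (hN : 0 < N) (hα : 0 ≤ α) (hγ : 0 ≤ γ) (hBL : ∀ b ∈ B, N * α ≤ #{l ∈ L | l * b ∈ A}) {m : F}
    (hm : N ^ 2 * γ ≤ #(linePoints B B (m, m - 1))) :
    N * (γ * α ^ 2 / 2 / 2) ≤ #{l ∈ L | N * (γ * α ^ 2 / 2 / 2) ≤ #{l' ∈ L |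
      N ^ 2 * (γ * α ^ 2 / 2) ≤ #(linePoints A A (l * m / l', l * (m - 1)))}} := by
  have hpairs := le_card_filter_rich_pairs hA hL hBA hL₀ hN hα hγ hBL hm
  refine le_card_filter_of_le_sum hL hN (by positivity)
    (fun l _ ↦ (Nat.cast_le.mpr (Finset.card_filter_le _ _)).trans hL) ?_
  calc N * N * (2 * (γ * α ^ 2 / 2 / 2)) = N ^ 2 * (γ * α ^ 2 / 2) := by ring
    _ ≤ _ := hpairs
    _ = _ := by
      rw [Finset.card_filter, Finset.sum_product]
      simp only [← Finset.card_filter, Nat.cast_sum]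

theorem le_card_filter_rich_ratios (hB : #B ≤ N ^ 2) (hM : #M ≤ N) (hM₀ : 0 ∉ M) (hN : 0 < N)
    (hβ : 0 ≤ β) (hγ : 0 ≤ γ) (hβM : N * β ≤ #M)
    (hBM : ∀ m ∈ M, N ^ 2 * γ ≤ #(linePoints B B (m, m - 1))) :
    N ^ 2 * (β ^ 2 * γ ^ 2 / 2) ≤ #{z ∈ M ×ˢ M |
      N ^ 2 * (β ^ 2 * γ ^ 2 / 2) ≤ #(linePoints B B (z.1 / z.2, z.1 / z.2 - 1))} := by
  have hMM : (#(M ×ˢ M) : ℝ) ≤ N ^ 2 := by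
    rw [Finset.card_product, Nat.cast_mul, sq]
    gcongr
  have hsum : N * β * (N ^ 2 * γ) ≤ ∑ m ∈ M, (#{x ∈ B | m * x + (m - 1) ∈ B} : ℝ) :=
    calc N * β * (N ^ 2 * γ) ≤ #M * (N ^ 2 * γ) := by gcongr
      _ ≤ ∑ m ∈ M, (#{x ∈ B | m * x + (m - 1) ∈ B} : ℝ) := by
        rw [← nsmul_eq_mul]
        exact Finset.card_nsmul_le_sum _ _ _ hBM
  have hcodeg : N ^ 2 * N ^ 2 * (2 * (β ^ 2 * γ ^ 2 / 2)) ≤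
      ∑ z ∈ M ×ˢ M, (#{x ∈ B | z.1 * x + (z.1 - 1) ∈ B ∧ z.2 * x + (z.2 - 1) ∈ B} : ℝ) := by
    refine le_of_mul_le_mul_left ?_ (show 0 < N ^ 2 by positivity)
    calc N ^ 2 * (N ^ 2 * N ^ 2 * (2 * (β ^ 2 * γ ^ 2 / 2))) = (N * β * (N ^ 2 * γ)) ^ 2 := by ring
      _ ≤ (∑ m ∈ M, (#{x ∈ B | m * x + (m - 1) ∈ B} : ℝ)) ^ 2 := by gcongr
      _ ≤ _ := sq_sum_card_filter_le M B fun m x ↦ m * x + (m - 1) ∈ B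
      _ ≤ _ := by gcongr
  refine (le_card_filter_of_le_sum hMM (by positivity) (by positivity)
    (fun z _ ↦ (Nat.cast_le.mpr (Finset.card_filter_le _ _)).trans hB) hcodeg).trans
    (Nat.cast_le.mpr (Finset.card_le_card ?_))
  refine fun z hz ↦ Finset.mem_filter.mpr ⟨(Finset.mem_filter.mp hz).1,
    (Finset.mem_filter.mp hz).2.trans (Nat.cast_le.mpr ?_)⟩
  have hz₂ : z.2 ≠ 0 := ne_of_mem_of_not_mem
    (Finset.mem_product.mp (Finset.mem_filter.mp hz).1).2 hM₀
  have hcomp := card_filter_le_card_linePoints hz₂ z.1 (z.2 - 1) (z.1 - 1) B B B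
  rw [show z.1 - 1 - z.1 / z.2 * (z.2 - 1) = z.1 / z.2 - 1 by field_simp; ring] at hcomp
  simpa only [and_comm] using hcomp

theorem le_card_filter_rich_dilates {σ : ℝ} (hA : #A ≤ N ^ 2) (hL : #L ≤ N) (hBA : B ⊆ A)
    (hN : 0 < N) (hα : 0 ≤ α) (hσ : 0 ≤ σ) (hBL : ∀ b ∈ B, N * α ≤ #{l ∈ L | l * b ∈ A}) {q : F}
    (hq : N ^ 2 * σ ≤ #(linePoints B B (q, q - 1))) :
    N * (σ * α / 2) ≤
      #{l ∈ L | N ^ 2 * (σ * α / 2) ≤ #(linePoints A A (l * q, l * (q - 1)))} := by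
  have hdeg : ∀ x ∈ linePoints B B (q, q - 1), N * α ≤ #{l ∈ L | l * (q * x + (q - 1)) ∈ A} :=
    fun x hx ↦ hBL _ (Finset.mem_filter.mp hx).2
  have hBN : (#(linePoints B B (q, q - 1)) : ℝ) ≤ N ^ 2 := (Nat.cast_le.mpr
    ((card_linePoints_le _ _ _).trans (Finset.card_le_card hBA))).trans hA
  refine (le_card_filter_of_le_card_filter _ hL (by positivity) hBN hq hα hdeg
    (by positivity) (by linarith)).trans (Nat.cast_le.mpr (Finset.card_le_card ?_))
  refine fun l hl ↦ Finset.mem_filter.mpr ⟨(Finset.mem_filter.mp hl).1,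
    (Finset.mem_filter.mp hl).2.trans (Nat.cast_le.mpr (Finset.card_le_card fun x hx ↦ ?_))⟩
  obtain ⟨hxB, hlx⟩ := Finset.mem_filter.mp hx
  refine Finset.mem_filter.mpr ⟨hBA (Finset.mem_filter.mp hxB).1, ?_⟩
  rwa [mul_add, ← mul_assoc] at hlx

theorem mul_le_sum_card_filter_ratio_and_intercept {Q T : Finset F} {a b : ℝ} (hb : 0 ≤ b)
    (hQ : a ≤ #{z ∈ M ×ˢ M | z.1 / z.2 ∈ Q}) (hT : ∀ m ∈ M, b ≤ #{l ∈ L | l * (m - 1) ∈ T}) :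
    a * b ≤ ∑ w ∈ M ×ˢ L, (#{m ∈ M | m / w.1 ∈ Q ∧ w.2 * (m - 1) ∈ T} : ℝ) :=
  calc a * b ≤ #{z ∈ M ×ˢ M | z.1 / z.2 ∈ Q} * b := by gcongr
    _ = ∑ m ∈ M, #{m' ∈ M | m / m' ∈ Q} * b := by
      rw [Finset.card_filter, Finset.sum_product, ← Finset.sum_mul]
      simp only [← Finset.card_filter, Nat.cast_sum]
    _ ≤ ∑ m ∈ M, (#{m' ∈ M | m / m' ∈ Q} : ℝ) * #{l ∈ L | l * (m - 1) ∈ T} :=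
      Finset.sum_le_sum fun m hm ↦ by gcongr; exact hT m hm
    _ = ∑ m ∈ M, (#{w ∈ M ×ˢ L | m / w.1 ∈ Q ∧ w.2 * (m - 1) ∈ T} : ℝ) := by
      refine Finset.sum_congr rfl fun m _ ↦ ?_
      rw [Finset.filter_product (fun m' ↦ m / m' ∈ Q) (fun l ↦ l * (m - 1) ∈ T),
        Finset.card_product, Nat.cast_mul]
    _ = ∑ w ∈ M ×ˢ L, (#{m ∈ M | m / w.1 ∈ Q ∧ w.2 * (m - 1) ∈ T} : ℝ) :=
      sum_card_filter_comm M (M ×ˢ L) fun m w ↦ m / w.1 ∈ Q ∧ w.2 * (m - 1) ∈ T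

end Core

section OrderedCore

variable {F : Type*} [Field F] [LinearOrder F] [IsStrictOrderedRing F] {A B L M : Finset F}
  {N α β γ ρ σ : ℝ}

theorem card_popular_intercepts_mul_pow_four_le {R : Finset (F × F)} (hA : #A ≤ N ^ 2) (hN : 0 < N)
    (hρ : 0 < ρ) (hNρ : 4 ≤ N ^ 2 * ρ) (hslope : ∀ ℓ ∈ R, ℓ.1 ≠ 0)
    (hrich : ∀ ℓ ∈ R, N ^ 2 * ρ ≤ #(linePoints A A ℓ)) :
    #{t ∈ R.image Prod.snd | N * (ρ / 2) ≤ #{ℓ ∈ R | ℓ.2 = t}} * ρ ^ 4 ≤ 162 * N := by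
  set T := {t ∈ R.image Prod.snd | N * (ρ / 2) ≤ #{ℓ ∈ R | ℓ.2 = t}}
  have hT : #T * (N * (ρ / 2)) ≤ #R := card_filter_image_mul_le R Prod.snd _
  have hR : #R * (N ^ 2 * ρ) ^ 3 ≤ 81 * (N ^ 2) ^ 2 * (N ^ 2) ^ 2 :=
    (card_mul_pow_three_le_of_rich hNρ hslope hrich).trans (by gcongr)
  refine le_of_mul_le_mul_right ?_ (show 0 < N ^ 7 by positivity)
  calc #T * ρ ^ 4 * N ^ 7 = 2 * (#T * (N * (ρ / 2)) * (N ^ 2 * ρ) ^ 3) := by ring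
    _ ≤ 2 * (#R * (N ^ 2 * ρ) ^ 3) := by gcongr
    _ ≤ 2 * (81 * (N ^ 2) ^ 2 * (N ^ 2) ^ 2) := by gcongr
    _ = 162 * N * N ^ 7 := by ring

theorem exists_popular_intercepts (hA : #A ≤ N ^ 2) (hL₀ : 0 ∉ L) (hM₀ : 0 ∉ M) (hN : 0 < N)
    (hρ : 0 < ρ) (hNρ : 4 ≤ N ^ 2 * ρ)
    (hLM : ∀ m ∈ M, N * (ρ / 2) ≤ #{l ∈ L | N * (ρ / 2) ≤ #{l' ∈ L |
      N ^ 2 * ρ ≤ #(linePoints A A (l * m / l', l * (m - 1)))}}) :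
    ∃ T : Finset F, #T * ρ ^ 4 ≤ 162 * N ∧
      ∀ m ∈ M, N * (ρ / 2) ≤ #{l ∈ L | l * (m - 1) ∈ T} := by
  let line : F × F × F → F × F := fun w ↦ (w.1 * w.2.1 / w.2.2, w.1 * (w.2.1 - 1))
  set R := {ℓ ∈ (L ×ˢ M ×ˢ L).image line | N ^ 2 * ρ ≤ #(linePoints A A ℓ)}
  have hslope : ∀ ℓ ∈ R, ℓ.1 ≠ 0 := fun ℓ hℓ ↦ by
    obtain ⟨⟨l, m, l'⟩, hw, rfl⟩ := Finset.mem_image.mp (Finset.mem_filter.mp hℓ).1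
    simp only [Finset.mem_product] at hw
    exact div_ne_zero (mul_ne_zero (ne_of_mem_of_not_mem hw.1 hL₀)
      (ne_of_mem_of_not_mem hw.2.1 hM₀)) (ne_of_mem_of_not_mem hw.2.2 hL₀)
  refine ⟨{t ∈ R.image Prod.snd | N * (ρ / 2) ≤ #{ℓ ∈ R | ℓ.2 = t}},
    card_popular_intercepts_mul_pow_four_le hA hN hρ hNρ hslope
      fun ℓ hℓ ↦ (Finset.mem_filter.mp hℓ).2,
    fun m hm ↦ (hLM m hm).trans (Nat.cast_le.mpr (Finset.card_le_card fun l hl ↦ ?_))⟩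
  obtain ⟨hlL, hl⟩ := Finset.mem_filter.mp hl
  have hlm : l * m ≠ 0 :=
    mul_ne_zero (ne_of_mem_of_not_mem hlL hL₀) (ne_of_mem_of_not_mem hm hM₀)
  have hfibre : N * (ρ / 2) ≤ #{ℓ ∈ R | ℓ.2 = l * (m - 1)} := by
    refine hl.trans (Nat.cast_le.mpr (Finset.card_le_card_of_injOn
      (fun l' ↦ line (l, m, l')) (fun l' hl' ↦ ?_) fun l' _ l'' _ h ↦ ?_))
    · obtain ⟨hlL', hrich⟩ := Finset.mem_filter.mp hl'
      refine Finset.mem_filter.mpr ⟨Finset.mem_filter.mpr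
        ⟨Finset.mem_image_of_mem line ?_, hrich⟩, rfl⟩
      simp only [Finset.mem_product]
      exact ⟨hlL, hm, hlL'⟩
    · exact inv_injective (mul_left_cancel₀ hlm
        (by simpa only [div_eq_mul_inv] using (Prod.mk.inj h).1))
  obtain ⟨ℓ, hℓ⟩ := Finset.card_pos.mp
    (Nat.cast_pos.mp ((show 0 < N * (ρ / 2) by positivity).trans_le hfibre))
  obtain ⟨hℓR, hℓ⟩ := Finset.mem_filter.mp hℓ
  exact Finset.mem_filter.mpr ⟨hlL, Finset.mem_filter.mpr
    ⟨hℓ ▸ Finset.mem_image_of_mem Prod.snd hℓR, hfibre⟩⟩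

theorem card_mul_pow_four_le_of_rich_dilates {Q : Finset F} {τ : ℝ} (hA : #A ≤ N ^ 2) (hL₀ : 0 ∉ L)
    (hQ₀ : 0 ∉ Q) (hN : 0 < N) (hNτ : 4 ≤ N ^ 2 * τ)
    (hQ : ∀ q ∈ Q, N * τ ≤ #{l ∈ L | N ^ 2 * τ ≤ #(linePoints A A (l * q, l * (q - 1)))}) :
    #Q * τ ^ 4 ≤ 81 * N := by
  set I := {w ∈ Q ×ˢ L | N ^ 2 * τ ≤ #(linePoints A A (w.2 * w.1, w.2 * (w.1 - 1)))} with hI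
  have hmem : ∀ w ∈ I, w.1 ≠ 0 ∧ w.2 ≠ 0 := fun w hw ↦ by
    have := Finset.mem_product.mp (Finset.mem_filter.mp hw).1
    exact ⟨ne_of_mem_of_not_mem this.1 hQ₀, ne_of_mem_of_not_mem this.2 hL₀⟩
  have hinj : Set.InjOn (fun w : F × F ↦ (w.2 * w.1, w.2 * (w.1 - 1))) I := by
    rintro ⟨q, l⟩ hw ⟨q', l'⟩ - h
    obtain ⟨h₁, h₂⟩ := Prod.mk.inj h
    obtain rfl : l = l' := by linear_combination h₁ - h₂
    exact Prod.ext (mul_left_cancel₀ (hmem _ hw).2 h₁) rfl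
  have hcount : #Q * (N * τ) ≤ #I := by
    rw [hI, Finset.card_filter, Finset.sum_product, Nat.cast_sum, ← nsmul_eq_mul]
    simp only [← Finset.card_filter]
    exact Finset.card_nsmul_le_sum _ _ _ hQ
  have hlines := card_mul_pow_three_le_of_injOn hinj hNτ
    (fun w hw ↦ mul_ne_zero (hmem w hw).2 (hmem w hw).1) fun w hw ↦ (Finset.mem_filter.mp hw).2
  refine le_of_mul_le_mul_right ?_ (show 0 < N ^ 7 by positivity)
  calc #Q * τ ^ 4 * N ^ 7 = #Q * (N * τ) * (N ^ 2 * τ) ^ 3 := by ring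
    _ ≤ #I * (N ^ 2 * τ) ^ 3 := by gcongr
    _ ≤ 81 * (#A : ℝ) ^ 2 * (#A : ℝ) ^ 2 := hlines
    _ ≤ 81 * (N ^ 2) ^ 2 * (N ^ 2) ^ 2 := by gcongr
    _ = 81 * N * N ^ 7 := by ring

theorem exists_popular_ratios (hA : #A ≤ N ^ 2) (hL : #L ≤ N) (hM : #M ≤ N) (hBA : B ⊆ A)
    (hL₀ : 0 ∉ L) (hM₀ : 0 ∉ M) (hN : 0 < N) (hα : 0 ≤ α) (hβ : 0 ≤ β) (hγ : 0 ≤ γ)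
    (hN₄ : 4 ≤ N ^ 2 * (β ^ 2 * γ ^ 2 / 2 * α / 2))
    (hBL : ∀ b ∈ B, N * α ≤ #{l ∈ L | l * b ∈ A}) (hβM : N * β ≤ #M)
    (hBM : ∀ m ∈ M, N ^ 2 * γ ≤ #(linePoints B B (m, m - 1))) :
    ∃ Q : Finset F, #Q * (β ^ 2 * γ ^ 2 / 2 * α / 2) ^ 4 ≤ 81 * N ∧
      N ^ 2 * (β ^ 2 * γ ^ 2 / 2) ≤ #{z ∈ M ×ˢ M | z.1 / z.2 ∈ Q} := by
  refine ⟨{q ∈ M / M | N ^ 2 * (β ^ 2 * γ ^ 2 / 2) ≤ #(linePoints B B (q, q - 1))}, ?_, ?_⟩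
  · refine card_mul_pow_four_le_of_rich_dilates hA hL₀
      (fun h ↦ ne_zero_of_mem_div hM₀ (Finset.mem_filter.mp h).1 rfl) hN hN₄ fun q hq ↦ ?_
    exact le_card_filter_rich_dilates hA hL hBA hN hα (by positivity) hBL
      (Finset.mem_filter.mp hq).2
  · refine (le_card_filter_rich_ratios ((Nat.cast_le.mpr (Finset.card_le_card hBA)).trans hA) hM hM₀
      hN hβ hγ hβM hBM).trans (Nat.cast_le.mpr (Finset.card_le_card fun z hz ↦ ?_))
    obtain ⟨hz, hrich⟩ := Finset.mem_filter.mp hz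
    obtain ⟨hz₁, hz₂⟩ := Finset.mem_product.mp hz
    exact Finset.mem_filter.mpr ⟨hz, Finset.mem_filter.mpr ⟨Finset.div_mem_div hz₁ hz₂, hrich⟩⟩

theorem pow_mul_le_card_ratios_mul_card_intercepts {Q T : Finset F} {κ : ℝ} (hL : #L ≤ N)
    (hM : #M ≤ N) (hL₀ : 0 ∉ L) (hM₀ : 0 ∉ M) (hN : 0 < N) (hρ : 0 ≤ ρ) (hκ : 0 ≤ κ)
    (hκρσ : 2 * κ ≤ σ * ρ) (hNκ : 4 ≤ N * κ)
    (hQ : N ^ 2 * σ ≤ #{z ∈ M ×ˢ M | z.1 / z.2 ∈ Q})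
    (hT : ∀ m ∈ M, N * ρ ≤ #{l ∈ L | l * (m - 1) ∈ T}) :
    N ^ 5 * κ ^ 4 ≤ 81 * (#Q : ℝ) ^ 2 * (#T : ℝ) ^ 2 := by
  set f : F × F → ℝ := fun w ↦ #{m ∈ M | m / w.1 ∈ Q ∧ w.2 * (m - 1) ∈ T}
  have hML : (#(M ×ˢ L) : ℝ) ≤ N ^ 2 := by
    rw [Finset.card_product, Nat.cast_mul, sq]
    gcongr
  have hsum : N ^ 2 * N * (2 * κ) ≤ ∑ w ∈ M ×ˢ L, f w :=
    calc N ^ 2 * N * (2 * κ) ≤ N ^ 2 * N * (σ * ρ) := by gcongr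
      _ = N ^ 2 * σ * (N * ρ) := by ring
      _ ≤ _ := mul_le_sum_card_filter_ratio_and_intercept (by positivity) hQ hT
  set W := {w ∈ M ×ˢ L | N * κ ≤ f w}
  have hW : N ^ 2 * κ ≤ #W := le_card_filter_of_le_sum hML hN hκ
    (fun w _ ↦ (Nat.cast_le.mpr (Finset.card_filter_le _ _)).trans hM) hsum
  have hmem : ∀ w ∈ W, w.1 ≠ 0 ∧ w.2 ≠ 0 := fun w hw ↦ by
    have := Finset.mem_product.mp (Finset.mem_filter.mp hw).1
    exact ⟨ne_of_mem_of_not_mem this.1 hM₀, ne_of_mem_of_not_mem this.2 hL₀⟩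
  have hinj : Set.InjOn (fun w : F × F ↦ (w.2 * w.1, -w.2)) W := by
    rintro ⟨m, l⟩ hw ⟨m', l'⟩ - h
    obtain ⟨h₁, h₂⟩ := Prod.mk.inj h
    obtain rfl : l = l' := neg_injective h₂
    exact Prod.ext (mul_left_cancel₀ (hmem _ hw).2 h₁) rfl
  -- `l * (m - 1) = l * m' * (m / m') - l`
  have hrich : ∀ w ∈ W, N * κ ≤ #(linePoints Q T (w.2 * w.1, -w.2)) := fun w hw ↦ by
    refine (Finset.mem_filter.mp hw).2.trans (Nat.cast_le.mpr ?_)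
    have hcomp := card_filter_le_card_linePoints (inv_ne_zero (hmem w hw).1) w.2 0 (-w.2) M Q T
    simpa only [mul_zero, sub_zero, add_zero, div_inv_eq_mul, ← sub_eq_add_neg, ← mul_sub_one,
      inv_mul_eq_div] using hcomp
  have hlines := card_mul_pow_three_le_of_injOn hinj hNκ
    (fun w hw ↦ mul_ne_zero (hmem w hw).2 (hmem w hw).1) hrich
  calc N ^ 5 * κ ^ 4 = N ^ 2 * κ * (N * κ) ^ 3 := by ring
    _ ≤ #W * (N * κ) ^ 3 := by gcongr
    _ ≤ _ := hlines

theorem four_le_sq_mul_of_le_mul (hα₀ : 0 < α) (hα₁ : α ≤ 1) (hβ₀ : 0 < β) (hβ₁ : β ≤ 1)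
    (hγ₀ : 0 < γ) (hγ₁ : γ ≤ 1) (hN₀ : 0 < N) (hN : 64 ≤ N * (α ^ 2 * β ^ 2 * γ ^ 3)) :
    4 ≤ N ^ 2 * (γ * α ^ 2 / 2) ∧ 4 ≤ N ^ 2 * (β ^ 2 * γ ^ 2 / 2 * α / 2) := by
  have hN₁ : 1 ≤ N := by
    have : N * (α ^ 2 * β ^ 2 * γ ^ 3) ≤ N * (1 ^ 2 * 1 ^ 2 * 1 ^ 3) := by gcongr
    linarith
  have hsq : ∀ x, α ^ 2 * β ^ 2 * γ ^ 3 ≤ x → 64 ≤ N ^ 2 * x := fun x hx ↦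
    hN.trans (by gcongr; exact le_self_pow₀ hN₁ two_ne_zero)
  have hNρ : 4 ≤ N ^ 2 * (γ * α ^ 2 / 2) := by
    have := hsq (γ * α ^ 2) <|
      calc α ^ 2 * β ^ 2 * γ ^ 3 = γ * α ^ 2 * (β ^ 2 * γ ^ 2) := by ring
        _ ≤ γ * α ^ 2 * (1 ^ 2 * 1 ^ 2) := by gcongr
        _ = γ * α ^ 2 := by ring
    linarith
  have hNτ : 4 ≤ N ^ 2 * (β ^ 2 * γ ^ 2 / 2 * α / 2) := by
    have := hsq (β ^ 2 * γ ^ 2 * α) <|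
      calc α ^ 2 * β ^ 2 * γ ^ 3 = β ^ 2 * γ ^ 2 * α * (α * γ) := by ring
        _ ≤ β ^ 2 * γ ^ 2 * α * (1 * 1) := by gcongr
        _ = β ^ 2 * γ ^ 2 * α := by ring
    linarith
  exact ⟨hNρ, hNτ⟩

theorem mul_pow_le_of_popular_dilates (hA : #A ≤ N ^ 2) (hL : #L ≤ N) (hM : #M ≤ N) (hBA : B ⊆ A)
    (hL₀ : 0 ∉ L) (hM₀ : 0 ∉ M) (hα₀ : 0 < α) (hα₁ : α ≤ 1) (hβ₀ : 0 < β) (hβ₁ : β ≤ 1)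
    (hγ₀ : 0 < γ) (hγ₁ : γ ≤ 1) (hN : 64 ≤ N * (α ^ 2 * β ^ 2 * γ ^ 3))
    (hBL : ∀ b ∈ B, N * α ≤ #{l ∈ L | l * b ∈ A}) (hβM : N * β ≤ #M)
    (hBM : ∀ m ∈ M, N ^ 2 * γ ≤ #(linePoints B B (m, m - 1))) :
    N * (α ^ 32 * β ^ 24 * γ ^ 36) ≤ 2 ^ 42 * 3 ^ 20 := by
  have hN₀ : 0 < N := pos_of_mul_pos_left (show 0 < N * (α ^ 2 * β ^ 2 * γ ^ 3) by linarith)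
    (by positivity)
  obtain ⟨hNρ, hNτ⟩ := four_le_sq_mul_of_le_mul hα₀ hα₁ hβ₀ hβ₁ hγ₀ hγ₁ hN₀ hN
  set ρ := γ * α ^ 2 / 2 with hρ
  set σ := β ^ 2 * γ ^ 2 / 2 with hσ
  set τ := σ * α / 2 with hτ
  have hNκ : 4 ≤ N * (σ * ρ / 4) := by rw [hσ, hρ]; linarith
  obtain ⟨Q, hQ, hMQ⟩ := exists_popular_ratios hA hL hM hBA hL₀ hM₀ hN₀ hα₀.le hβ₀.le hγ₀.le hNτ
    hBL hβM hBM
  obtain ⟨T, hT, hTM⟩ := exists_popular_intercepts hA hL₀ hM₀ hN₀ (by positivity) hNρ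
    fun m hm ↦ le_card_filter_rich_slopes hA hL hBA hL₀ hN₀ hα₀.le hγ₀.le hBL (hBM m hm)
  have hQT := pow_mul_le_card_ratios_mul_card_intercepts hL hM hL₀ hM₀ hN₀ (by positivity)
    (by positivity) (show 2 * (σ * ρ / 4) ≤ σ * (ρ / 2) by linarith) hNκ hMQ hTM
  refine le_of_mul_le_mul_right ?_ (show 0 < N ^ 4 by positivity)
  calc N * (α ^ 32 * β ^ 24 * γ ^ 36) * N ^ 4
      = 2 ^ 40 * (N ^ 5 * (σ * ρ / 4) ^ 4 * (τ ^ 8 * ρ ^ 8)) := by rw [hτ, hσ, hρ]; ring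
    _ ≤ 2 ^ 40 * (81 * (#Q : ℝ) ^ 2 * (#T : ℝ) ^ 2 * (τ ^ 8 * ρ ^ 8)) := by gcongr
    _ = 2 ^ 40 * (81 * (#Q * τ ^ 4) ^ 2 * (#T * ρ ^ 4) ^ 2) := by ring
    _ ≤ 2 ^ 40 * (81 * (81 * N) ^ 2 * (162 * N) ^ 2) := by gcongr
    _ = 2 ^ 42 * 3 ^ 20 * N ^ 4 := by ring

end OrderedCore

section SumProduct

variable {F : Type*} [Field F]

theorem mulPairCount_image_add_one [DecidableEq F] (m : F) (B : Finset F) :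
    mulPairCount m (B.image (· + 1)) = #(linePoints B B (m, m - 1)) := by
  rw [mulPairCount_eq_card_filter, Finset.filter_image,
    Finset.card_image_of_injective _ (add_left_injective 1)]
  refine congrArg Finset.card (Finset.filter_congr fun x _ ↦ ?_)
  rw [← (add_left_injective (1 : F)).mem_finset_image (s := B)]
  ring_nf

variable [LinearOrder F] [IsStrictOrderedRing F] {A B L M : Finset F} {N t : ℝ}

theorem le_pow_of_popular_dilates (hA : #A = N ^ 2) (hL : #L ≤ N) (hM : #M ≤ N) (hBA : B ⊆ A)
    (hL₀ : 0 ∉ L) (hM₀ : 0 ∉ M) (ht : 2 ≤ t) (htN : t ^ 149 ≤ N)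
    (hBL : ∀ b ∈ B, N * (t ^ 10)⁻¹ ≤ #{l ∈ L | l * b ∈ A}) (hM' : N * (t ^ 24)⁻¹ ≤ #M)
    (hBM : ∀ m ∈ M, N ^ 2 * (t ^ 25)⁻¹ ≤ #(linePoints B B (m, m - 1))) : N ≤ t ^ 1870 := by
  have hinv : ∀ i, (t ^ i)⁻¹ ≤ 1 := fun i ↦ inv_le_one_of_one_le₀ (one_le_pow₀ (by linarith))
  have hN : 64 ≤ N * ((t ^ 10)⁻¹ ^ 2 * (t ^ 24)⁻¹ ^ 2 * (t ^ 25)⁻¹ ^ 3) := by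
    simp only [← inv_pow, ← pow_mul, ← pow_add]
    rw [inv_pow, ← div_eq_mul_inv, le_div_iff₀ (by positivity)]
    calc 64 * t ^ 143 = 2 ^ 6 * t ^ 143 := by norm_num
      _ ≤ t ^ 6 * t ^ 143 := by gcongr
      _ = t ^ 149 := (pow_add t 6 143).symm
      _ ≤ N := htN
  have hcore := mul_pow_le_of_popular_dilates hA.le hL hM hBA hL₀ hM₀ (by positivity) (hinv 10)
    (by positivity) (hinv 24) (by positivity) (hinv 25) hN hBL hM' hBM
  refine le_of_mul_le_mul_right ?_ (show 0 < (t ^ 1796)⁻¹ by positivity)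
  calc N * (t ^ 1796)⁻¹ = N * ((t ^ 10)⁻¹ ^ 32 * (t ^ 24)⁻¹ ^ 24 * (t ^ 25)⁻¹ ^ 36) := by
        simp only [← inv_pow, ← pow_mul, ← pow_add]
    _ ≤ 2 ^ 74 := hcore.trans (by norm_num)
    _ ≤ t ^ 74 := by gcongr
    _ = t ^ 1870 * (t ^ 1796)⁻¹ := by
      rw [← div_eq_mul_inv, eq_div_iff (by positivity), ← pow_add]

theorem exists_isMulSidon_of_card_eq_sq (h₀ : 0 ∉ A) (h₁ : -1 ∉ A) (hA : #A = N ^ 2) {k : ℕ}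
    (ht : 2 ≤ t) (htN : t ^ 1900 ≤ N) (hNk : N ^ 4 ≤ t ^ k) :
    ∃ S : Finset F, (S ⊆ A ∨ S ⊆ A.image (· + 1)) ∧ IsMulSidon (3 * k) S ∧ N * t ≤ #S := by
  have ht₁ : 1 ≤ t := by linarith
  have hpow : ∀ i ≤ 1900, t ^ i ≤ N := fun i hi ↦ (pow_le_pow_right₀ ht₁ hi).trans htN
  have hinv : ∀ i, (t ^ i)⁻¹ ≤ 1 := fun i ↦ inv_le_one_of_one_le₀ (one_le_pow₀ ht₁)
  obtain ⟨S, hSA, hS, hcard⟩ | ⟨L, hL₀, hL, B, hBA, hB, hBL⟩ :=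
    exists_isMulSidon_or_exists_popular_subset h₀ hA ht (hpow 2 (by norm_num)) hNk
  · exact ⟨S, .inl hSA, hS, hcard⟩
  have hB₀ : 0 ∉ B.image (· + 1) := fun h ↦ by
    obtain ⟨x, hx, hx₁⟩ := Finset.mem_image.mp h
    exact h₁ (eq_neg_of_add_eq_zero_left hx₁ ▸ hBA hx)
  have hBcard : #(B.image (· + 1)) = #B := Finset.card_image_of_injective _ (add_left_injective 1)
  obtain ⟨S, hSB, hS, hcard⟩ | ⟨M, hM₀, hBM, hβM, hM⟩ :=
    exists_isMulSidon_or_exists_popular hB₀ (N := N) (t := t) (β := (t ^ 10)⁻¹)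
      (by rw [hBcard, ← hA]; exact_mod_cast Finset.card_le_card hBA) (by rwa [hBcard])
      (by positivity) (hinv 10) ht
      (by rw [← div_eq_mul_inv, le_div_iff₀ (by positivity), ← pow_add]; exact hpow _ (by norm_num))
      hNk
  · exact ⟨S, .inr (hSB.trans (Finset.image_subset_image hBA)), hS, hcard⟩
  simp only [mulPairCount_image_add_one] at hBM
  refine absurd (le_pow_of_popular_dilates hA hL hM hBA hL₀ hM₀ ht (hpow 149 (by norm_num)) hBL ?_
    fun m hm ↦ ?_) (htN.trans_lt' (pow_lt_pow_right₀ (by linarith) (by norm_num))).not_ge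
  · convert hβM using 2
    field_simp
  · convert hBM m hm using 2
    field_simp

theorem exists_isMulSidon_rpow_le_card (h₀ : 0 ∉ A) (h₁ : -1 ∉ A)
    (hA : 2 ≤ (#A : ℝ) ^ (4000 : ℝ)⁻¹) :
    ∃ S : Finset F, (S ⊆ A ∨ S ⊆ A.image (· + 1)) ∧ IsMulSidon 24000 S ∧
      (#A : ℝ) ^ (1 / 2 + 1 / 4000 : ℝ) ≤ #S := by
  set t := (#A : ℝ) ^ (4000 : ℝ)⁻¹
  have hpow : ∀ i : ℕ, t ^ i = (#A : ℝ) ^ (i / 4000 : ℝ) := fun i ↦ by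
    rw [← Real.rpow_mul_natCast (Nat.cast_nonneg _), inv_mul_eq_div]
  have hAt : #A = (t ^ 2000) ^ 2 := by
    rw [← pow_mul, hpow]
    norm_num
  obtain ⟨S, hSA, hS, hcard⟩ := exists_isMulSidon_of_card_eq_sq (k := 8000) h₀ h₁ hAt hA
    (pow_le_pow_right₀ (by linarith) (by norm_num)) (pow_mul t 2000 4).ge
  refine ⟨S, hSA, hS.mono (by norm_num), ?_⟩
  calc (#A : ℝ) ^ (1 / 2 + 1 / 4000 : ℝ) = t ^ 2001 := by rw [hpow]; norm_num
    _ = t ^ 2000 * t := pow_succ t 2000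
    _ ≤ #S := hcard

end SumProduct

theorem stmt8_general.{u} :
    ∃ c K c0 : ℝ, 0 < c ∧ 1 ≤ K ∧ 0 < c0 ∧
      ∀ {F : Type u} [Field F] [LinearOrder F] [IsStrictOrderedRing F] (A : Finset F),
        ∃ S : Finset F, (S ⊆ A ∨ S ⊆ A.image (· + 1)) ∧ IsMulSidon K S ∧
          c0 * (#A : ℝ) ^ ((1 : ℝ) / 2 + c) ≤ #S := by
  obtain ⟨n₀, hn₀⟩ := Filter.eventually_atTop.mp
    ((tendsto_rpow_atTop (show (0 : ℝ) < 4000⁻¹ by norm_num)).eventually_ge_atTop 2)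
  refine ⟨1 / 4000, max 24000 (2 * n₀), 1 / 2, by norm_num,
    le_max_of_le_left (by norm_num), by norm_num, fun {F} _ _ _ A ↦ ?_⟩
  by_cases hA : (#A : ℝ) ≤ max 24000 (2 * n₀)
  · refine ⟨A, .inl subset_rfl, .of_card_le hA, ?_⟩
    rcases A.eq_empty_or_nonempty with rfl | hne
    · norm_num
    have hA₁ : (1 : ℝ) ≤ #A := by exact_mod_cast hne.card_pos
    have := Real.rpow_le_self_of_one_le hA₁ (show (1 / 2 + 1 / 4000 : ℝ) ≤ 1 by norm_num)
    linarith
  obtain ⟨hA₁, hA₂⟩ := max_lt_iff.mp (not_le.mp hA)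
  have hcard : (#A : ℝ) ≤ 2 * #(A \ {0, -1}) := by
    have : #A ≤ #(A \ {0, -1}) + 2 := by
      have := Finset.card_le_card_sdiff_add_card (s := A) (t := {0, -1})
      have := Finset.card_le_two (a := (0 : F)) (b := -1)
      omega
    rify at this
    linarith
  obtain ⟨S, hSA, hS, hcardS⟩ := exists_isMulSidon_rpow_le_card (A := A \ {0, -1}) (by simp)
    (by simp) (hn₀ _ (by linarith))
  refine ⟨S, hSA.imp (·.trans Finset.sdiff_subset)
    (·.trans (Finset.image_subset_image Finset.sdiff_subset)), hS.mono (le_max_left _ _), ?_⟩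
  calc 1 / 2 * (#A : ℝ) ^ (1 / 2 + 1 / 4000 : ℝ)
      ≤ 1 / 2 * (2 * #(A \ {0, -1}) : ℝ) ^ (1 / 2 + 1 / 4000 : ℝ) := by gcongr
    _ = 1 / 2 * (2 ^ (1 / 2 + 1 / 4000 : ℝ) * (#(A \ {0, -1}) : ℝ) ^ (1 / 2 + 1 / 4000 : ℝ)) := by
      rw [Real.mul_rpow (by norm_num) (by positivity)]
    _ ≤ 1 / 2 * (2 * #S) := by
      gcongr
      exact Real.rpow_le_self_of_one_le one_le_two (by norm_num)
    _ = #S := by ring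

theorem stmt8 :
    ∃ c K c0 : ℝ, 0 < c ∧ 1 ≤ K ∧ 0 < c0 ∧
      ∀ A : Finset ℝ,
        ∃ S : Finset ℝ,
          (S ⊆ A ∨ S ⊆ A.image (· + 1)) ∧ IsMulSidon K S ∧
          c0 * (A.card : ℝ) ^ ((1 : ℝ) / 2 + c) ≤ S.card := by
  obtain ⟨c, K, c0, hc, hK, hc0, h⟩ := stmt8_general
  exact ⟨c, K, c0, hc, hK, hc0, fun A ↦ h A⟩
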